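/- arXiv:1012.0023 — 2 statements merged into one kernel-verified Lean document; each statement's English description precedes it below -/
import Mathlib

section
/- The language L = { 0^j 1^m 0^r 1^i 0^l 1^i 0^r 1^m 0^j : j, m, i, l, r ≥ 1 and r is prime } over the alphabet {0, 1} is not context-free. -/
/-- The `i`-fold repetition `v^i` of a word `v`. -/
def wordPow {T : Type} (v : List T) : ℕ → List T
  | 0 => []
  | n + 1 => v ++ wordPow v n

/-- A production of a linear grammar: either `A → u` (with `u` a terminal word)
or `A → u B w` (with `u, w` terminal words and `B` a nonterminal). -/
structure LinearRule (T N : Type) where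
  input : N
  output : List T ⊕ (List T × N × List T)

/-- `LinDerives rs A p` : from nonterminal `A`, the linear productions in `rs`
derive the terminal word `p`. -/
inductive LinDerives {T N : Type} (rs : List (LinearRule T N)) : N → List T → Prop
  | terminal {A : N} {u : List T} (hr : (⟨A, Sum.inl u⟩ : LinearRule T N) ∈ rs) :
      LinDerives rs A u
  | step {A B : N} {u w p : List T}
      (hr : (⟨A, Sum.inr (u, B, w)⟩ : LinearRule T N) ∈ rs)
      (hp : LinDerives rs B p) :
      LinDerives rs A (u ++ p ++ w)

/-- A linear grammar: a type of nonterminals, a start symbol, and a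
finite list of linear productions. -/
structure LinearGrammar (T : Type) where
  NT : Type
  start : NT
  rules : List (LinearRule T NT)

/-- The language generated by a linear grammar. -/
def LinearGrammar.language {T : Type} (G : LinearGrammar T) : Set (List T) :=
  {p | LinDerives G.rules G.start p}

/-- A linear grammar is `(g/h)`-rated linear (`k = g/h`) if every production
`A → u B w` satisfies `h * |w| = g * |u|`. -/
def LinearGrammar.IsRated {T : Type} (g h : ℕ) (G : LinearGrammar T) : Prop :=
  ∀ r ∈ G.rules, ∀ u w, ∀ B : G.NT, r.output = Sum.inr (u, B, w) →
    h * w.length = g * u.length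

/-- A grammar generates exactly the language `L`, up to the empty word. -/
def LinearGrammar.GeneratesModEmpty {T : Type} (G : LinearGrammar T) (L : Set (List T)) :
    Prop :=
  ∀ p : List T, p ≠ [] → (p ∈ L ↔ p ∈ G.language)

/-- A language is linear if some linear grammar generates it, up to the empty word. -/
def IsLinearLang {T : Type} (L : Set (List T)) : Prop :=
  ∃ G : LinearGrammar T, G.GeneratesModEmpty L

/-- A language is `(g/h)`-rated linear if some `(g/h)`-rated linear grammar
generates it, up to the empty word. -/
def IsRatedLinearLang {T : Type} (g h : ℕ) (L : Set (List T)) : Prop :=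
  ∃ G : LinearGrammar T, G.IsRated g h ∧ G.GeneratesModEmpty L

/-- A `k`-linear grammar: a linear grammar together with the extra production
`S → S₁S₂⋯S_k` from a start symbol `S`, where none of the `Sᵢ` (the `heads`)
occurs on the right-hand side of any other production and `S` occurs in no other
production at all (the latter is automatic here, since the start symbol is kept
as a fresh symbol outside the type `NT` of the remaining nonterminals). -/
structure KLinearGrammar (T : Type) (k : ℕ) where
  NT : Type
  heads : Fin k → NT
  rules : List (LinearRule T NT)
  heads_not_on_rhs : ∀ r ∈ rules, ∀ u w, ∀ B : NT, r.output = Sum.inr (u, B, w) →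
    ∀ i : Fin k, B ≠ heads i

/-- The language generated by a `k`-linear grammar: as the start symbol occurs
only in the production `S → S₁S₂⋯S_k`, it consists of the concatenations
`p₁p₂⋯p_k` where each `pᵢ` is derived from `Sᵢ` by the linear productions. -/
def KLinearGrammar.language {T : Type} {k : ℕ} (G : KLinearGrammar T k) : Set (List T) :=
  {p | ∃ ps : Fin k → List T, p = (List.ofFn ps).flatten ∧
    ∀ i : Fin k, LinDerives G.rules (G.heads i) (ps i)}

/-- A language is `k`-linear if some `k`-linear grammar generates it, up to the
empty word. -/
def IsKLinearLang {T : Type} (k : ℕ) (L : Set (List T)) : Prop :=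
  ∃ G : KLinearGrammar T k, ∀ p : List T, p ≠ [] → (p ∈ L ↔ p ∈ G.language)

/-- A language is metalinear if it is `k`-linear for some positive integer `k`. -/
def IsMetalinearLang {T : Type} (L : Set (List T)) : Prop :=
  ∃ k : ℕ, 0 < k ∧ IsKLinearLang k L

/-- The language `{0ʲ 1ᵐ 0ʳ 1ⁱ 0ˡ 1ⁱ 0ʳ 1ᵐ 0ʲ : j, m, i, l, r ≥ 1, r prime}`
(Example 11), over the alphabet `Fin 2`. -/
def primeLang : Language (Fin 2) :=
  {p | ∃ j m i l r : ℕ, 1 ≤ j ∧ 1 ≤ m ∧ 1 ≤ i ∧ 1 ≤ l ∧ 1 ≤ r ∧ Nat.Prime r ∧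
    p = List.replicate j 0 ++ List.replicate m 1 ++ List.replicate r 0 ++
        List.replicate i 1 ++ List.replicate l 0 ++ List.replicate i 1 ++
        List.replicate r 0 ++ List.replicate m 1 ++ List.replicate j 0}

/-!
*Pumping.* Call a parse forest thin if no nonterminal repeats along a path; a thin forest has
bounded yield. Build a derivation from the bottom up, putting a production `A → α` on top of thin
trees. Either `A` does not occur below, and the result is thin, or it does, and the part between
the two occurrences is a loop `A ⇒* v A y` of bounded size. If `v y` is empty the loop is cut out,
and otherwise it can be pumped.

*Counting.* Pump `0 1 0ʳ 1 0 1 0ʳ 1 0` with `r` a large prime. Every word of the language has at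
least four `1`s, so pumping down shows that `v` and `y` contain none, and the sequence of lengths
of the five blocks of `0`s is an affine function `c + n d` of the number `n` of repetitions. Blocks
`0`, `2` and `4` have length one for `n = 1` and are nonempty for `n = 0`, so `d` vanishes there;
blocks `1` and `3` always agree, so `d₁ = d₃ > 0`. For `n = r + 1` block `1` has length
`r (1 + d₁)`, which is not prime.
-/

section Pumping

variable {T : Type*} {g : ContextFreeGrammar T}

lemma derives_append {s s' t t' : List (Symbol T g.NT)} (hs : g.Derives s s')
    (ht : g.Derives t t') : g.Derives (s ++ t) (s' ++ t') :=
  (hs.append_right t).trans (ht.append_left s')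

lemma derives_output_of_mem_rules {r : ContextFreeRule T g.NT} (hr : r ∈ g.rules) :
    g.Derives [.nonterminal r.input] r.output :=
  ContextFreeGrammar.Produces.single ⟨r, hr, .input_output⟩

/-- `DerivesAround g s u A z`: the sentential form `s` derives `u A z`, where `u` and `z` are
terminal words. With `s = A` this is a loop of the grammar, which may be iterated. -/
def DerivesAround (g : ContextFreeGrammar T) (s : List (Symbol T g.NT)) (u : List T) (A : g.NT)
    (z : List T) : Prop :=
  g.Derives s (u.map .terminal ++ [.nonterminal A] ++ z.map .terminal)

namespace DerivesAround

variable {s t : List (Symbol T g.NT)} {u v w x y z : List T} {A B : g.NT}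

lemma refl (A : g.NT) : DerivesAround g [.nonterminal A] [] A [] :=
  Relation.ReflTransGen.refl

lemma append_left (hs : DerivesAround g s u A z) (ht : g.Derives t (w.map .terminal)) :
    DerivesAround g (t ++ s) (w ++ u) A z := by
  simpa [DerivesAround] using derives_append ht hs

lemma append_right (hs : DerivesAround g s u A z) (ht : g.Derives t (w.map .terminal)) :
    DerivesAround g (s ++ t) u A (z ++ w) := by
  simpa [DerivesAround] using derives_append hs ht

lemma derives_trans (hs : DerivesAround g s u A z) (hA : g.Derives [.nonterminal A] t) :
    g.Derives s (u.map .terminal ++ t ++ z.map .terminal) :=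
  hs.trans ((hA.append_left _).append_right _)

lemma derives_terminal (hs : DerivesAround g s u A z)
    (hA : g.Derives [.nonterminal A] (x.map .terminal)) :
    g.Derives s ((u ++ x ++ z).map .terminal) := by
  simpa using hs.derives_trans hA

lemma trans (hs : DerivesAround g s u A z) (hA : DerivesAround g [.nonterminal A] v B y) :
    DerivesAround g s (u ++ v) B (y ++ z) := by
  simpa [DerivesAround] using hs.derives_trans hA

lemma iterate (hA : DerivesAround g [.nonterminal A] v A y) (n : ℕ) :
    DerivesAround g [.nonterminal A] (List.replicate n v).flatten A
      (List.replicate n y).flatten := by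
  induction n with
  | zero => exact refl A
  | succ n ih =>
    rw [List.replicate_succ, List.replicate_succ', List.flatten_cons, List.flatten_concat]
    exact hA.trans ih

end DerivesAround

/-- `ThinYield g X s w`: the sentential form `s` yields the terminal word `w` by a parse forest
whose nonterminals all belong to `X` and in which no path from a root to a leaf meets the same
nonterminal twice. -/
inductive ThinYield (g : ContextFreeGrammar T) :
    Set g.NT → List (Symbol T g.NT) → List T → Prop
  | nil (X : Set g.NT) : ThinYield g X [] []
  | terminal {X : Set g.NT} {s : List (Symbol T g.NT)} {w : List T} (a : T)
      (hs : ThinYield g X s w) : ThinYield g X (.terminal a :: s) (a :: w)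
  | nonterminal {X : Set g.NT} {s : List (Symbol T g.NT)} {w₁ w₂ : List T}
      {r : ContextFreeRule T g.NT} (hr : r ∈ g.rules) (hX : r.input ∈ X)
      (hout : ThinYield g (X \ {r.input}) r.output w₁) (hs : ThinYield g X s w₂) :
      ThinYield g X (.nonterminal r.input :: s) (w₁ ++ w₂)

namespace ThinYield

variable {X Y : Set g.NT} {s t : List (Symbol T g.NT)} {w w' : List T}

lemma singleton {r : ContextFreeRule T g.NT} (hr : r ∈ g.rules) (hX : r.input ∈ X)
    (hout : ThinYield g (X \ {r.input}) r.output w) :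
    ThinYield g X [.nonterminal r.input] w := by
  simpa using nonterminal hr hX hout (nil X)

lemma map_terminal (X : Set g.NT) (w : List T) : ThinYield g X (w.map .terminal) w := by
  induction w with
  | nil => exact nil X
  | cons a w ih => exact terminal a ih

lemma derives (h : ThinYield g X s w) : g.Derives s (w.map .terminal) := by
  induction h with
  | nil => exact .refl _
  | terminal a _ ih => simpa using ih.append_left [.terminal a]
  | nonterminal hr _ _ _ ih_out ih =>
    simpa using derives_append ((derives_output_of_mem_rules hr).trans ih_out) ih

lemma mono (h : ThinYield g X s w) (hXY : X ⊆ Y) : ThinYield g Y s w := by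
  induction h generalizing Y with
  | nil => exact nil Y
  | terminal a _ ih => exact terminal a (ih hXY)
  | nonterminal hr hX _ _ ih_out ih =>
    exact nonterminal hr (hXY hX) (ih_out (Set.sdiff_subset_sdiff_left hXY)) (ih hXY)

lemma append (hs : ThinYield g X s w) (ht : ThinYield g X t w') :
    ThinYield g X (s ++ t) (w ++ w') := by
  induction hs with
  | nil => exact ht
  | terminal a _ ih => exact terminal a (ih ht)
  | nonterminal hr hX hout _ _ ih =>
    rw [List.append_assoc]
    exact nonterminal hr hX hout (ih ht)

lemma exists_of_append (h : ThinYield g X (s ++ t) w) :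
    ∃ w₁ w₂, w = w₁ ++ w₂ ∧ ThinYield g X s w₁ ∧ ThinYield g X t w₂ := by
  induction s generalizing w with
  | nil => exact ⟨[], w, rfl, nil X, h⟩
  | cons c s ih =>
    rw [List.cons_append] at h
    cases h with
    | terminal a h =>
      obtain ⟨w₁, w₂, rfl, hs, ht⟩ := ih h
      exact ⟨a :: w₁, w₂, rfl, terminal a hs, ht⟩
    | nonterminal hr hX hout h =>
      obtain ⟨w₁, w₂, rfl, hs, ht⟩ := ih h
      exact ⟨_ ++ w₁, w₂, (List.append_assoc ..).symm, nonterminal hr hX hout hs, ht⟩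

lemma avoids_or_derivesAround (h : ThinYield g X s w) (A : g.NT) :
    ThinYield g (X \ {A}) s w ∨
      ∃ u x z, w = u ++ x ++ z ∧ DerivesAround g s u A z ∧ ThinYield g X [.nonterminal A] x := by
  induction h with
  | nil => exact .inl (nil _)
  | terminal a _ ih =>
    rcases ih with havoid | ⟨u, x, z, rfl, hs, hx⟩
    · exact .inl (terminal a havoid)
    · exact .inr ⟨a :: u, x, z, rfl, hs.append_left (t := [.terminal a]) (w := [a]) (.refl _), hx⟩
  | @nonterminal X s w₁ w₂ r hr hX hout hs ih_out ih =>
    by_cases hA : r.input = A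
    · subst hA
      exact .inr ⟨[], w₁, w₂, rfl, (DerivesAround.refl _).append_right hs.derives,
        singleton hr hX hout⟩
    have hr' := derives_output_of_mem_rules hr
    rcases ih_out with hout_avoid | ⟨u, x, z, rfl, hd, hx⟩
    · rcases ih with hs_avoid | ⟨u, x, z, rfl, hd, hx⟩
      · rw [Set.sdiff_sdiff_comm] at hout_avoid
        exact .inl (nonterminal hr ⟨hX, hA⟩ hout_avoid hs_avoid)
      · exact .inr ⟨w₁ ++ u, x, z, by simp, hd.append_left (hr'.trans hout.derives), hx⟩
    · have hd' : DerivesAround g [.nonterminal r.input] u A z := hr'.trans hd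
      exact .inr ⟨u, x, z ++ w₂, by simp, hd'.append_right hs.derives, hx.mono Set.sdiff_subset⟩

lemma length_le {M : ℕ} (hM : ∀ r ∈ g.rules, r.output.length ≤ M) (hfin : X.Finite)
    (h : ThinYield g X s w) : w.length ≤ s.length * (M + 1) ^ X.ncard := by
  induction h with
  | nil => simp
  | @terminal X s w _ _ ih =>
    have hpow : 1 ≤ (M + 1) ^ X.ncard := Nat.one_le_pow _ _ M.succ_pos
    calc w.length + 1 ≤ s.length * (M + 1) ^ X.ncard + (M + 1) ^ X.ncard :=
          add_le_add (ih hfin) hpow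
      _ = (s.length + 1) * (M + 1) ^ X.ncard := by ring
  | @nonterminal X s w₁ w₂ r hr hX _ _ ih_out ih =>
    have hout : w₁.length ≤ (M + 1) ^ X.ncard :=
      calc w₁.length ≤ r.output.length * (M + 1) ^ (X \ {r.input}).ncard := ih_out hfin.sdiff
        _ ≤ (M + 1) * (M + 1) ^ (X \ {r.input}).ncard := by
          gcongr
          exact (hM r hr).trans M.le_succ
        _ = (M + 1) ^ X.ncard := by
          rw [← pow_succ', Set.ncard_sdiff_singleton_add_one hX hfin]
    calc (w₁ ++ w₂).length = w₁.length + w₂.length := List.length_append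
      _ ≤ (M + 1) ^ X.ncard + s.length * (M + 1) ^ X.ncard := add_le_add hout (ih hfin)
      _ = (s.length + 1) * (M + 1) ^ X.ncard := by ring

end ThinYield

/-- The sentential form `s` derives `w` through a loop `A ⇒* v A y` with `v y` nonempty, where the
factor of `w` below the upper `A` has length at most `N`. -/
def Pumpable (g : ContextFreeGrammar T) (N : ℕ) (s : List (Symbol T g.NT)) (w : List T) : Prop :=
  ∃ (A : g.NT) (u v x y z : List T), w = u ++ v ++ x ++ y ++ z ∧ (v ++ x ++ y).length ≤ N ∧
    v ++ y ≠ [] ∧ DerivesAround g s u A z ∧ DerivesAround g [.nonterminal A] v A y ∧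
    g.Derives [.nonterminal A] (x.map .terminal)

variable {X : Set g.NT} {M N : ℕ} {s s' : List (Symbol T g.NT)} {w : List T}

lemma Pumpable.of_produces (hss' : g.Produces s s') (h : Pumpable g N s' w) :
    Pumpable g N s w := by
  obtain ⟨A, u, v, x, y, z, hw, hlen, hne, hs', hloop, hx⟩ := h
  exact ⟨A, u, v, x, y, z, hw, hlen, hne, hss'.trans_derives hs', hloop, hx⟩

lemma ThinYield.of_produces_or_pumpable (hfin : X.Finite) (hX : ∀ r ∈ g.rules, r.input ∈ X)
    (hM : ∀ r ∈ g.rules, r.output.length ≤ M) (hss' : g.Produces s s')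
    (h : ThinYield g X s' w) :
    ThinYield g X s w ∨ Pumpable g (M * (M + 1) ^ X.ncard) s w := by
  obtain ⟨r, hr, hrw⟩ := hss'
  obtain ⟨p, q, rfl, rfl⟩ := hrw.exists_parts
  obtain ⟨w', w₃, rfl, hleft, hq⟩ := h.exists_of_append
  obtain ⟨w₁, w₂, rfl, hp, hout⟩ := hleft.exists_of_append
  have thin_of_thin_input (hr_thin : ThinYield g X [.nonterminal r.input] w₂) :
      ThinYield g X (p ++ [.nonterminal r.input] ++ q) (w₁ ++ w₂ ++ w₃) :=
    (hp.append hr_thin).append hq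
  rcases hout.avoids_or_derivesAround r.input with havoid | ⟨v, x, y, rfl, hd, hx⟩
  · exact .inl (thin_of_thin_input (.singleton hr (hX r hr) havoid))
  by_cases hne : v ++ y = []
  · obtain ⟨rfl, rfl⟩ := List.append_eq_nil_iff.1 hne
    exact .inl (thin_of_thin_input (by simpa using hx))
  · have hlen : (v ++ x ++ y).length ≤ M * (M + 1) ^ X.ncard :=
      (hout.length_le hM hfin).trans (Nat.mul_le_mul_right _ (hM r hr))
    have hs : DerivesAround g (p ++ [.nonterminal r.input] ++ q) w₁ r.input w₃ :=
      derives_append (hp.derives.append_right _) hq.derives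
    have hloop : DerivesAround g [.nonterminal r.input] v r.input y :=
      (derives_output_of_mem_rules hr).trans hd
    exact .inr ⟨r.input, w₁, v, x, y, w₃, by simp, hlen, hne, hs, hloop, hx.derives⟩

lemma thinYield_or_pumpable (hfin : X.Finite) (hX : ∀ r ∈ g.rules, r.input ∈ X)
    (hM : ∀ r ∈ g.rules, r.output.length ≤ M) (h : g.Derives s (w.map .terminal)) :
    ThinYield g X s w ∨ Pumpable g (M * (M + 1) ^ X.ncard) s w := by
  induction h using Relation.ReflTransGen.head_induction_on with
  | refl => exact .inl (.map_terminal X w)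
  | head hss' _ ih =>
    rcases ih with hthin | hpump
    · exact hthin.of_produces_or_pumpable hfin hX hM hss'
    · exact .inr (hpump.of_produces hss')

theorem exists_pumping_of_isContextFree {L : Language T} (hL : L.IsContextFree) :
    ∃ p : ℕ, ∀ w ∈ L, p ≤ w.length → ∃ u v x y z : List T,
      w = u ++ v ++ x ++ y ++ z ∧ (v ++ x ++ y).length ≤ p ∧ v ++ y ≠ [] ∧
      ∀ n, u ++ (List.replicate n v).flatten ++ x ++ (List.replicate n y).flatten ++ z ∈ L := by
  obtain ⟨g, rfl⟩ := hL
  let X : Set g.NT := ContextFreeRule.input '' (g.rules : Set (ContextFreeRule T g.NT))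
  let M : ℕ := g.rules.sup fun r ↦ r.output.length
  have hfin : X.Finite := g.rules.finite_toSet.image _
  have hX : ∀ r ∈ g.rules, r.input ∈ X := fun r hr ↦ ⟨r, hr, rfl⟩
  have hM : ∀ r ∈ g.rules, r.output.length ≤ M := fun r hr ↦
    Finset.le_sup (f := fun r : ContextFreeRule T g.NT ↦ r.output.length) hr
  refine ⟨(M + 1) * (M + 1) ^ X.ncard + 1, fun w hw hlen ↦ ?_⟩
  rcases thinYield_or_pumpable hfin hX hM hw with
    hthin | ⟨A, u, v, x, y, z, rfl, hvxy, hne, hs, hloop, hx⟩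
  · have hshort := hthin.length_le hM hfin
    rw [List.length_singleton] at hshort
    have hle : 1 * (M + 1) ^ X.ncard ≤ (M + 1) * (M + 1) ^ X.ncard := by
      gcongr
      exact M.succ_pos
    omega
  · refine ⟨u, v, x, y, z, rfl, hvxy.trans ?_, hne, fun n ↦ ?_⟩
    · exact (Nat.mul_le_mul_right _ M.le_succ).trans (Nat.le_succ _)
    · rw [ContextFreeGrammar.mem_language_iff]
      simpa using (hs.trans (hloop.iterate n)).derives_terminal hx

end Pumping

section Segments

open Polynomial

variable {α : Type*} [DecidableEq α] {s : α} {u v x y z : List α}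

/-- The generating polynomial `∑ ℓₖ Xᵏ` of the lengths `ℓₖ` of the segments into which the
occurrences of the separator `s` cut a word. -/
noncomputable def segmentPoly (s : α) : List α → ℕ[X]
  | [] => 0
  | a :: w => if a = s then X * segmentPoly s w else 1 + segmentPoly s w

lemma segmentPoly_append (s : α) (u w : List α) :
    segmentPoly s (u ++ w) = segmentPoly s u + X ^ u.count s * segmentPoly s w := by
  induction u with
  | nil => simp [segmentPoly]
  | cons a u ih =>
    by_cases ha : a = s
    · simp only [List.cons_append, segmentPoly, ih, List.count_cons, ha, beq_self_eq_true,
        if_true]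
      ring
    · simp [segmentPoly, ha, ih, add_assoc]

lemma segmentPoly_of_notMem {w : List α} (hw : s ∉ w) : segmentPoly s w = (w.length : ℕ[X]) := by
  induction w with
  | nil => simp [segmentPoly]
  | cons a w ih =>
    obtain ⟨ha, hw⟩ := List.ne_and_not_mem_of_not_mem_cons hw
    simp [segmentPoly, ha.symm, ih hw, add_comm]

lemma segmentPoly_replicate_self (s : α) (n : ℕ) : segmentPoly s (List.replicate n s) = 0 := by
  induction n with
  | zero => rfl
  | succ n ih => simp [List.replicate_succ, segmentPoly, ih]

lemma notMem_of_count_append_le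
    (h : (u ++ v ++ x ++ y ++ z).count s ≤ (u ++ x ++ z).count s) : s ∉ v ∧ s ∉ y := by
  simp only [List.count_append] at h
  exact ⟨List.count_eq_zero.1 (by omega), List.count_eq_zero.1 (by omega)⟩

lemma count_pump (hv : s ∉ v) (hy : s ∉ y) (n : ℕ) :
    (u ++ (List.replicate n v).flatten ++ x ++ (List.replicate n y).flatten ++ z).count s =
      (u ++ v ++ x ++ y ++ z).count s := by
  simp [List.count_flatten, List.count_eq_zero.2 hv, List.count_eq_zero.2 hy]

lemma segmentPoly_pump (hv : s ∉ v) (hy : s ∉ y) (n : ℕ) :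
    segmentPoly s
        (u ++ (List.replicate n v).flatten ++ x ++ (List.replicate n y).flatten ++ z) =
      segmentPoly s (u ++ x ++ z) +
        n • (v.length • X ^ u.count s + y.length • X ^ (u ++ x).count s) := by
  have hvn : s ∉ (List.replicate n v).flatten := by simp [hv]
  have hyn : s ∉ (List.replicate n y).flatten := by simp [hy]
  simp only [segmentPoly_append, List.count_append, segmentPoly_of_notMem hvn,
    segmentPoly_of_notMem hyn, List.count_eq_zero.2 hvn, List.count_eq_zero.2 hyn,
    List.length_flatten, List.map_replicate, List.sum_replicate, smul_eq_mul, Nat.cast_mul]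
  ring

end Segments

section PrimeLang

open Polynomial

/-- The word `0ʲ 1ᵐ 0ʳ 1ⁱ 0ˡ 1ⁱ 0ʳ 1ᵐ 0ʲ`, the general shape of the elements of `primeLang`. -/
def blockWord (j m r i l : ℕ) : List (Fin 2) :=
  List.replicate j 0 ++ List.replicate m 1 ++ List.replicate r 0 ++
    List.replicate i 1 ++ List.replicate l 0 ++ List.replicate i 1 ++
    List.replicate r 0 ++ List.replicate m 1 ++ List.replicate j 0

lemma mem_primeLang_iff {w : List (Fin 2)} :
    w ∈ primeLang ↔ ∃ j m i l r : ℕ, 1 ≤ j ∧ 1 ≤ m ∧ 1 ≤ i ∧ 1 ≤ l ∧ 1 ≤ r ∧ r.Prime ∧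
      w = blockWord j m r i l :=
  Iff.rfl

lemma count_one_blockWord (j m r i l : ℕ) : (blockWord j m r i l).count 1 = 2 * (m + i) := by
  simp only [blockWord, List.count_append, List.count_replicate, Fin.reduceBEq,
    beq_self_eq_true, Bool.false_eq_true, if_true, if_false, add_zero, zero_add]
  ring

lemma segmentPoly_one_blockWord (j m r i l : ℕ) :
    segmentPoly 1 (blockWord j m r i l) =
      (j : ℕ[X]) + r • X ^ m + l • X ^ (m + i) + r • X ^ (m + 2 * i) + j • X ^ (2 * m + 2 * i) := by
  have segmentPoly_zeros (n : ℕ) : segmentPoly (1 : Fin 2) (List.replicate n 0) = n := by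
    simp [segmentPoly_of_notMem]
  simp only [blockWord, segmentPoly_append, segmentPoly_zeros, segmentPoly_replicate_self,
    List.count_append, List.count_replicate_self, List.count_replicate, Fin.reduceBEq,
    Bool.false_eq_true, if_false, add_zero, zero_add]
  ring

lemma four_le_count_one_of_mem_primeLang {w : List (Fin 2)} (hw : w ∈ primeLang) :
    4 ≤ w.count 1 := by
  obtain ⟨j, m, i, l, r, -, hm, hi, -, -, -, rfl⟩ := mem_primeLang_iff.1 hw
  rw [count_one_blockWord]
  omega

/-- The generating polynomial of the lengths of the blocks of `0`s of `0ʲ 1 0ʳ 1 0ˡ 1 0ʳ 1 0ʲ`. -/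
noncomputable def blockPoly (j r l : ℕ) : ℕ[X] :=
  (j : ℕ[X]) + r • X + l • X ^ 2 + r • X ^ 3 + j • X ^ 4

lemma coeff_blockPoly (j r l k : ℕ) :
    (blockPoly j r l).coeff k =
      match k with
      | 0 => j | 1 => r | 2 => l | 3 => r | 4 => j | _ + 5 => 0 := by
  rcases k with _ | _ | _ | _ | _ | k <;>
    simp [blockPoly, coeff_X, coeff_X_pow, coeff_natCast_ite]

lemma segmentPoly_one_blockWord_eq_blockPoly (j r l : ℕ) :
    segmentPoly 1 (blockWord j 1 r 1 l) = blockPoly j r l := by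
  simp [segmentPoly_one_blockWord, blockPoly]

lemma exists_segmentPoly_eq_blockPoly {w : List (Fin 2)} (hw : w ∈ primeLang)
    (hcount : w.count 1 = 4) :
    ∃ j r l, 1 ≤ j ∧ 1 ≤ l ∧ r.Prime ∧ segmentPoly 1 w = blockPoly j r l := by
  obtain ⟨j, m, i, l, r, hj, hm, hi, hl, -, hr, rfl⟩ := mem_primeLang_iff.1 hw
  rw [count_one_blockWord] at hcount
  obtain ⟨rfl, rfl⟩ : m = 1 ∧ i = 1 := by omega
  exact ⟨j, r, l, hj, hl, hr, segmentPoly_one_blockWord_eq_blockPoly j r l⟩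

lemma eq_zero_of_forall_add_nsmul_eq_blockPoly {P D : ℕ[X]} {r : ℕ}
    (hone : P + D = blockPoly 1 r 1)
    (hall : ∀ n : ℕ, ∃ j q l, 1 ≤ j ∧ 1 ≤ l ∧ q.Prime ∧ P + n • D = blockPoly j q l) :
    D = 0 := by
  obtain ⟨j, q, l, hj, hl, hq, hP⟩ := hall 0
  rw [zero_nsmul, add_zero] at hP
  have hcoeff (k : ℕ) :
      (blockPoly j q l).coeff k + D.coeff k = (blockPoly 1 r 1).coeff k := by
    rw [← hP, ← coeff_add, hone]
  simp only [coeff_blockPoly] at hcoeff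
  have hr : q + D.coeff 1 = r := hcoeff 1
  have hD₁ : D.coeff 1 = 0 := by
    by_contra hpos
    obtain ⟨_, q', _, -, -, hq', hpump⟩ := hall (r + 1)
    have hq'_eq : q' = r * (1 + D.coeff 1) :=
      calc q' = q + (r + 1) * D.coeff 1 := by
            simpa only [hP, coeff_add, coeff_smul, smul_eq_mul, coeff_blockPoly] using
              (congrArg (coeff · 1) hpump).symm
        _ = r * (1 + D.coeff 1) := by rw [← hr]; ring
    have hr_ne_one : r ≠ 1 := by have := hq.two_le; omega
    exact Nat.not_prime_mul hr_ne_one (by omega) (hq'_eq ▸ hq')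
  ext k
  have hk := hcoeff k
  rcases k with _ | _ | _ | _ | _ | k <;> simp only [coeff_zero] at hk ⊢ <;> omega

lemma append_eq_nil_of_forall_pump_mem_primeLang {r : ℕ} {u v x y z : List (Fin 2)}
    (hw : blockWord 1 1 r 1 1 = u ++ v ++ x ++ y ++ z)
    (hpump : ∀ n, u ++ (List.replicate n v).flatten ++ x ++ (List.replicate n y).flatten ++ z ∈
      primeLang) :
    v ++ y = [] := by
  have hcount : (u ++ v ++ x ++ y ++ z).count 1 = 4 := hw ▸ count_one_blockWord 1 1 r 1 1
  have hcount_down : 4 ≤ (u ++ x ++ z).count 1 :=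
    four_le_count_one_of_mem_primeLang (by simpa using hpump 0)
  obtain ⟨hv, hy⟩ : 1 ∉ v ∧ 1 ∉ y := notMem_of_count_append_le (hcount.trans_le hcount_down)
  have hpoly := segmentPoly_pump (u := u) (x := x) (z := z) hv hy
  have hpoly_one : segmentPoly 1 (u ++ x ++ z) +
      (v.length • X ^ u.count 1 + y.length • X ^ (u ++ x).count 1) = blockPoly 1 r 1 := by
    simpa [← segmentPoly_one_blockWord_eq_blockPoly, hw] using (hpoly 1).symm
  have hstep := eq_zero_of_forall_add_nsmul_eq_blockPoly hpoly_one fun n ↦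
    hpoly n ▸ exists_segmentPoly_eq_blockPoly (hpump n) ((count_pump hv hy n).trans hcount)
  simpa using congrArg (eval 1) hstep

end PrimeLang

/-- The language `{0ʲ 1ᵐ 0ʳ 1ⁱ 0ˡ 1ⁱ 0ʳ 1ᵐ 0ʲ : j, m, i, l, r ≥ 1, r prime}` is
not context-free (Example 11). -/
theorem primeLang_not_contextFree : ¬ primeLang.IsContextFree := by
  intro hL
  obtain ⟨p, hp⟩ := exists_pumping_of_isContextFree hL
  obtain ⟨r, hpr, hr⟩ := Nat.exists_infinite_primes p
  have hmem : blockWord 1 1 r 1 1 ∈ primeLang :=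
    mem_primeLang_iff.2 ⟨1, 1, 1, 1, r, le_rfl, le_rfl, le_rfl, le_rfl, hr.one_le, hr, rfl⟩
  have hlong : p ≤ (blockWord 1 1 r 1 1).length := by
    simp only [blockWord, List.length_append, List.length_replicate]
    omega
  obtain ⟨u, v, x, y, z, hw, -, hne, hpump⟩ := hp _ hmem hlong
  exact hne (append_eq_nil_of_forall_pump_mem_primeLang hw hpump)
end

section
/- Let H be an infinite subset of { 2^k : k ∈ ℕ }, and let L₂ = { a^l b^l a^m b^m a^n b^n : l, m, n ≥ 1, and (l ∈ H or m ∈ H or n ∈ H) } ∪ { a^i b^i a^j b^j : i, j ≥ 1 } over the alphabet {a, b}. Then L₂ is not context-free. -/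
/-- The language
`L₂ = {aˡ bˡ aᵐ bᵐ aⁿ bⁿ : l, m, n ≥ 1, l ∈ H or m ∈ H or n ∈ H} ∪ {aⁱ bⁱ aʲ bʲ : i, j ≥ 1}`
(Example 14), with alphabet `{a, b}` taken to be `Fin 2` (`a = 0`, `b = 1`). -/
def L2 (H : Set ℕ) : Set (List (Fin 2)) :=
  {p | (∃ l m n : ℕ, 1 ≤ l ∧ 1 ≤ m ∧ 1 ≤ n ∧ (l ∈ H ∨ m ∈ H ∨ n ∈ H) ∧
          p = List.replicate l 0 ++ List.replicate l 1 ++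
              List.replicate m 0 ++ List.replicate m 1 ++
              List.replicate n 0 ++ List.replicate n 1) ∨
       (∃ i j : ℕ, 1 ≤ i ∧ 1 ≤ j ∧
          p = List.replicate i 0 ++ List.replicate i 1 ++
              List.replicate j 0 ++ List.replicate j 1)}

section WordPow

variable {T : Type}

theorem wordPow_succ' (v : List T) (n : ℕ) : wordPow v (n + 1) = wordPow v n ++ v := by
  induction n with
  | zero => simp [wordPow]
  | succ n ih =>
    calc wordPow v (n + 2) = v ++ (wordPow v n ++ v) := congrArg (v ++ ·) ih
      _ = wordPow v (n + 1) ++ v := (List.append_assoc _ _ _).symm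

@[simp]
theorem length_wordPow (v : List T) (n : ℕ) : (wordPow v n).length = n * v.length := by
  induction n with
  | zero => simp [wordPow]
  | succ n ih => rw [wordPow, List.length_append, ih, Nat.succ_mul, Nat.add_comm]

end WordPow

/-- `Yields g s w`: the terminal word `w` is the yield of a forest of parse trees of the grammar `g`
whose roots are labelled by the symbols of `s`. -/
inductive Yields {T : Type*} (g : ContextFreeGrammar T) : List (Symbol T g.NT) → List T → Prop
  | nil : Yields g [] []
  | terminal {s : List (Symbol T g.NT)} {w : List T} (a : T) (h : Yields g s w) :
      Yields g (Symbol.terminal a :: s) (a :: w)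
  | nonterminal {s : List (Symbol T g.NT)} {x w : List T} {r : ContextFreeRule T g.NT}
      (hr : r ∈ g.rules) (hx : Yields g r.output x) (h : Yields g s w) :
      Yields g (Symbol.nonterminal r.input :: s) (x ++ w)

section ParseTrees

variable {T : Type*} {g : ContextFreeGrammar T}

theorem derives_output {r : ContextFreeRule T g.NT} (hr : r ∈ g.rules) :
    g.Derives [Symbol.nonterminal r.input] r.output :=
  ContextFreeGrammar.Produces.single ⟨r, hr, .input_output⟩

theorem Yields.derives {s : List (Symbol T g.NT)} {w : List T} (h : Yields g s w) :
    g.Derives s (w.map Symbol.terminal) := by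
  induction h with
  | nil => exact .refl _
  | terminal a _ ih => exact ih.append_left [Symbol.terminal a]
  | nonterminal hr _ _ ihx ih =>
    rw [List.map_append]
    exact (((derives_output hr).trans ihx).append_right _).trans (ih.append_left _)

theorem Yields.exists_of_append {s t : List (Symbol T g.NT)} {w : List T}
    (h : Yields g (s ++ t) w) : ∃ x y, w = x ++ y ∧ Yields g s x ∧ Yields g t y := by
  induction s generalizing w with
  | nil => exact ⟨[], w, rfl, .nil, h⟩
  | cons c s ih =>
    rw [List.cons_append] at h
    cases h with
    | terminal a h =>
      obtain ⟨x, y, rfl, hx, hy⟩ := ih h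
      exact ⟨a :: x, y, rfl, .terminal a hx, hy⟩
    | nonterminal hr hz h =>
      obtain ⟨x, y, rfl, hx, hy⟩ := ih h
      exact ⟨_, y, (List.append_assoc _ _ _).symm, .nonterminal hr hz hx, hy⟩

theorem Yields.of_rewrites {r : ContextFreeRule T g.NT} (hr : r ∈ g.rules)
    {s t : List (Symbol T g.NT)} (hst : r.Rewrites s t) {w : List T} (ht : Yields g t w) :
    Yields g s w := by
  induction hst generalizing w with
  | head s =>
    obtain ⟨x, y, rfl, hx, hy⟩ := ht.exists_of_append
    exact .nonterminal hr hx hy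
  | cons c _ ih =>
    cases ht with
    | terminal a h => exact .terminal a (ih h)
    | nonterminal hr' hx h => exact .nonterminal hr' hx (ih h)

theorem Yields.of_derives {s : List (Symbol T g.NT)} {w : List T}
    (h : g.Derives s (w.map Symbol.terminal)) : Yields g s w := by
  induction h using Relation.ReflTransGen.head_induction_on with
  | refl =>
    induction w with
    | nil => exact .nil
    | cons a w ih => exact .terminal a ih
  | head hst _ ih =>
    obtain ⟨r, hr, hst⟩ := hst
    exact .of_rewrites hr hst ih

/-- The nonterminal `A` derives the terminal word `w` in the grammar `g`. -/
def DerivesWord (g : ContextFreeGrammar T) (A : g.NT) (w : List T) : Prop :=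
  g.Derives [Symbol.nonterminal A] (w.map Symbol.terminal)

/-- The nonterminal `A` derives `u B z` in the grammar `g`, where `u` and `z` are terminal words:
a parse tree with root `A` and a single open leaf `B`. -/
def DerivesContext (g : ContextFreeGrammar T) (A : g.NT) (u : List T) (B : g.NT) (z : List T) :
    Prop :=
  g.Derives [Symbol.nonterminal A]
    (u.map Symbol.terminal ++ [Symbol.nonterminal B] ++ z.map Symbol.terminal)

theorem DerivesWord.exists_rule {A : g.NT} {w : List T} (h : DerivesWord g A w) :
    ∃ r ∈ g.rules, r.input = A := by
  by_contra! hA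
  refine ContextFreeGrammar.derives_nonterminal hA _ ?_ h
  cases w <;> simp

theorem DerivesContext.refl (A : g.NT) : DerivesContext g A [] A [] :=
  ContextFreeGrammar.Derives.refl _

theorem DerivesContext.trans {A B C : g.NT} {u v y z : List T} (hAB : DerivesContext g A u B z)
    (hBC : DerivesContext g B v C y) : DerivesContext g A (u ++ v) C (y ++ z) := by
  have h := ContextFreeGrammar.Derives.trans hAB
    ((ContextFreeGrammar.Derives.append_left hBC (u.map Symbol.terminal)).append_right
      (z.map Symbol.terminal))
  simpa [DerivesContext, List.append_assoc] using h

theorem DerivesContext.derivesWord {A B : g.NT} {u x z : List T} (h : DerivesContext g A u B z)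
    (hx : DerivesWord g B x) : DerivesWord g A (u ++ x ++ z) := by
  rw [DerivesWord, List.map_append, List.map_append]
  exact ContextFreeGrammar.Derives.trans h
    ((ContextFreeGrammar.Derives.append_left hx _).append_right _)

/-- `HasSubtree g p q`: some parse tree with root `p.1` and yield `p.2` has a subtree with root
`q.1` and yield `q.2`. -/
def HasSubtree (g : ContextFreeGrammar T) (p q : g.NT × List T) : Prop :=
  DerivesWord g q.1 q.2 ∧ ∃ u z, p.2 = u ++ q.2 ++ z ∧ DerivesContext g p.1 u q.1 z

theorem HasSubtree.refl {A : g.NT} {w : List T} (h : DerivesWord g A w) :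
    HasSubtree g (A, w) (A, w) :=
  ⟨h, [], [], by simp, .refl A⟩

theorem HasSubtree.trans {p q t : g.NT × List T} (hpq : HasSubtree g p q)
    (hqt : HasSubtree g q t) : HasSubtree g p t := by
  obtain ⟨-, u, z, hp, hpq⟩ := hpq
  obtain ⟨ht, v, y, hq, hqt⟩ := hqt
  exact ⟨ht, u ++ v, y ++ z, by simp [hp, hq], hpq.trans hqt⟩

theorem HasSubtree.length_le {p q : g.NT × List T} (h : HasSubtree g p q) :
    q.2.length ≤ p.2.length := by
  obtain ⟨-, u, z, hp, -⟩ := h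
  simp only [hp, List.length_append]
  omega

/-- Some parse tree with root `p.1` and yield `p.2` has a subtree whose yield is strictly shorter
than `p.2`, but still longer than `c`. -/
def HasShorterSubtree (g : ContextFreeGrammar T) (c : ℕ) (p : g.NT × List T) : Prop :=
  ∃ q, HasSubtree g p q ∧ c < q.2.length ∧ q.2.length < p.2.length

theorem HasSubtree.hasShorterSubtree {c N : ℕ} {p q : g.NT × List T} (hpq : HasSubtree g p q)
    (hc : c < q.2.length) (hq : N < q.2.length → HasShorterSubtree g c q)
    (hp : N < p.2.length) : HasShorterSubtree g c p := by
  rcases hpq.length_le.lt_or_eq with hlt | heq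
  · exact ⟨q, hpq, hc, hlt⟩
  · obtain ⟨t, hqt, hct, htq⟩ := hq (heq ▸ hp)
    exact ⟨t, hpq.trans hqt, hct, heq ▸ htq⟩

-- The last conjunct is what keeps the induction going: the selected tree may carry the whole yield,
-- and then a shorter one has to be found inside it.
theorem Yields.exists_long_tree {b c : ℕ} (hb : ∀ r ∈ g.rules, r.output.length ≤ b) (hc : 1 ≤ c)
    {s : List (Symbol T g.NT)} {w : List T} (h : Yields g s w) (hw : s.length * c < w.length) :
    ∃ u B x z, w = u ++ x ++ z ∧ DerivesWord g B x ∧ c < x.length ∧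
      g.Derives s (u.map Symbol.terminal ++ [Symbol.nonterminal B] ++ z.map Symbol.terminal) ∧
      (b * c < x.length → HasShorterSubtree g c (B, x)) := by
  induction h with
  | nil => simp at hw
  | terminal a _ ih =>
    simp only [List.length_cons, Nat.add_mul] at hw
    obtain ⟨u, B, x, z, rfl, hx, hcx, hd, hB⟩ := ih (by omega)
    exact ⟨a :: u, B, x, z, rfl, hx, hcx, hd.append_left [Symbol.terminal a], hB⟩
  | @nonterminal s x w r hr hx hs ihx ih =>
    have hrx : g.Derives [Symbol.nonterminal r.input] (x.map Symbol.terminal) :=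
      (derives_output hr).trans hx.derives
    by_cases hcx : c < x.length
    · refine ⟨[], r.input, x, w, rfl, hrx, hcx, hs.derives.append_left [_], fun hbx => ?_⟩
      obtain ⟨u, B, y, z, hxy, hy, hcy, hd, hB⟩ :=
        ihx ((Nat.mul_le_mul_right c (hb r hr)).trans_lt hbx)
      have hsub : HasSubtree g (r.input, x) (B, y) :=
        ⟨hy, u, z, hxy, (derives_output hr).trans hd⟩
      exact hsub.hasShorterSubtree hcy hB hbx
    · simp only [List.length_cons, List.length_append, Nat.add_mul] at hw
      obtain ⟨u, B, y, z, rfl, hy, hcy, hd, hB⟩ := ih (by omega)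
      refine ⟨x ++ u, B, y, z, by simp, hy, hcy, ?_, hB⟩
      simpa [List.append_assoc] using
        (hrx.append_right s).trans (hd.append_left (x.map Symbol.terminal))

theorem DerivesWord.hasShorterSubtree {b c : ℕ} (hb : ∀ r ∈ g.rules, r.output.length ≤ b)
    (hb1 : 1 ≤ b) (hc : 1 ≤ c) {A : g.NT} {w : List T} (h : DerivesWord g A w)
    (hw : b * c < w.length) : HasShorterSubtree g c (A, w) := by
  have hcw : [Symbol.nonterminal (T := T) A].length * c < w.length := by
    simpa using (Nat.le_mul_of_pos_left c hb1).trans_lt hw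
  obtain ⟨u, B, x, z, hwx, hx, hcx, hd, hB⟩ := (Yields.of_derives h).exists_long_tree hb hc hcw
  have hsub : HasSubtree g (A, w) (B, x) := ⟨hx, u, z, hwx, hd⟩
  exact hsub.hasShorterSubtree hcx hB hw

theorem DerivesWord.exists_branch {b : ℕ} (hb : ∀ r ∈ g.rules, r.output.length ≤ b) (hb1 : 1 ≤ b)
    (n : ℕ) {A : g.NT} {w : List T} (h : DerivesWord g A w) (hw : b ^ n < w.length) :
    ∃ l : List (g.NT × List T), l.length = n + 1 ∧ (∀ q ∈ l, HasSubtree g (A, w) q) ∧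
      l.Pairwise fun p q => HasSubtree g p q ∧ q.2.length < p.2.length := by
  induction n generalizing A w with
  | zero => exact ⟨[(A, w)], rfl, by simpa using .refl h, List.pairwise_singleton _ _⟩
  | succ n ih =>
    obtain ⟨⟨B, x⟩, hsub, hnx, hxw⟩ :=
      h.hasShorterSubtree hb hb1 (Nat.one_le_pow n b hb1) (by rwa [← Nat.pow_succ'])
    obtain ⟨l, hlen, hl, hpair⟩ := ih hsub.1 hnx
    have hroot : ∀ q ∈ l, HasSubtree g (A, w) q ∧ q.2.length < w.length := fun q hq =>
      ⟨hsub.trans (hl q hq), (hl q hq).length_le.trans_lt hxw⟩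
    refine ⟨(A, w) :: l, by simp [hlen], ?_, List.pairwise_cons.mpr ⟨hroot, hpair⟩⟩
    exact List.forall_mem_cons.mpr ⟨.refl h, fun q hq => (hroot q hq).1⟩

end ParseTrees

theorem exists_rel_map_eq_of_pairwise {α β : Type*} {R : α → α → Prop} {l : List α}
    (hl : l.Pairwise R) {c : α → β} {K : Finset β} (hc : ∀ a ∈ l, c a ∈ K)
    (hK : K.card < l.length) : ∃ a ∈ l, ∃ b ∈ l, R a b ∧ c a = c b := by
  classical
  by_contra! hne
  have hnodup : (l.map c).Nodup :=
    List.pairwise_map.mpr (hl.imp_of_mem fun ha hb hab => hne _ ha _ hb hab)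
  have hsub : (l.map c).toFinset ⊆ K := by simpa [Finset.subset_iff] using hc
  have hcard := Finset.card_le_card hsub
  rw [List.toFinset_card_of_nodup hnodup, List.length_map] at hcard
  omega

theorem take_append_congr {α : Type*} {k : ℕ} {x x' : List α} (h : x.take k = x'.take k)
    (z : List α) :
    (x ++ z).take k = (x' ++ z).take k := by
  have hlen := congrArg List.length h
  simp only [List.length_take] at hlen
  rw [List.take_append, List.take_append, h, show k - x.length = k - x'.length by omega]

theorem take_context_congr {α : Type*} {k : ℕ} (u x x' z : List α)
    (h : x.take k = x'.take k) :
    (u ++ x ++ z).take k = (u ++ x' ++ z).take k := by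
  refine take_append_congr ?_ z
  have hsub := congrArg (List.take (k - u.length)) h
  rw [List.take_take, List.take_take, min_eq_left (Nat.sub_le _ _)] at hsub
  rw [List.take_append, List.take_append, hsub]

section Pumping

variable {T : Type}

theorem DerivesContext.wordPow {g : ContextFreeGrammar T} {A : g.NT} {v y : List T}
    (h : DerivesContext g A v A y) (i : ℕ) :
    DerivesContext g A (wordPow v i) A (wordPow y i) := by
  induction i with
  | zero => exact .refl A
  | succ i ih =>
    rw [wordPow_succ' y]
    exact h.trans ih

theorem map_wordPow_context_eq {κ : Type*} {φ : List T → κ}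
    (hφ : ∀ u x x' z, φ x = φ x' → φ (u ++ x ++ z) = φ (u ++ x' ++ z))
    {v x y : List T} (h : φ (v ++ x ++ y) = φ x) (i : ℕ) :
    φ (wordPow v i ++ x ++ wordPow y i) = φ x := by
  induction i with
  | zero => simp [wordPow]
  | succ i ih =>
    calc φ (wordPow v (i + 1) ++ x ++ wordPow y (i + 1))
        = φ (v ++ (wordPow v i ++ x ++ wordPow y i) ++ y) := by
          rw [wordPow_succ' y]
          simp [wordPow]
      _ = φ (v ++ x ++ y) := hφ v _ _ y ih
      _ = φ x := h

theorem exists_pump_of_finite_range {κ : Type*} {L : Language T} (hL : L.IsContextFree)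
    {φ : List T → κ} (hfin : (Set.range φ).Finite)
    (hφ : ∀ u x x' z, φ x = φ x' → φ (u ++ x ++ z) = φ (u ++ x' ++ z)) :
    ∃ N : ℕ, ∀ w ∈ L, N < w.length → ∃ u v x y z : List T,
      w = u ++ (v ++ x ++ y) ++ z ∧ 0 < v.length + y.length ∧
      ∀ i, u ++ (wordPow v i ++ x ++ wordPow y i) ++ z ∈ L ∧
        φ (u ++ (wordPow v i ++ x ++ wordPow y i) ++ z) = φ w := by
  classical
  obtain ⟨g, rfl⟩ := hL
  let b := g.rules.sup (fun r => r.output.length) + 1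
  have hb (r) (hr : r ∈ g.rules) : r.output.length ≤ b :=
    (Finset.le_sup (f := fun r : ContextFreeRule T g.NT => r.output.length) hr).trans
      (Nat.le_succ _)
  let K : Finset (g.NT × κ) := g.rules.image (·.input) ×ˢ hfin.toFinset
  refine ⟨b ^ K.card, fun w hw hlen => ?_⟩
  obtain ⟨l, hl, hroot, hpair⟩ :=
    DerivesWord.exists_branch hb (Nat.le_add_left 1 _) K.card hw hlen
  have hcolour : ∀ p ∈ l, (p.1, φ p.2) ∈ K := fun p hp => by
    simpa [K] using (hroot p hp).1.exists_rule
  obtain ⟨⟨A, p⟩, hp, ⟨B, x⟩, -, ⟨⟨hx, v, y, hpx, hvy⟩, hlt⟩, heq⟩ :=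
    exists_rel_map_eq_of_pairwise hpair hcolour (by omega)
  obtain ⟨-, u, z, hw, huz⟩ := hroot _ hp
  obtain ⟨rfl, hφx⟩ := Prod.mk.inj heq
  dsimp only at hw hpx hφx hlt
  subst hw hpx
  refine ⟨u, v, x, y, z, rfl, ?_, fun i => ⟨?_, ?_⟩⟩
  · simp only [List.length_append] at hlt
    omega
  · exact huz.derivesWord ((hvy.wordPow i).derivesWord hx)
  · exact hφ u _ _ z ((map_wordPow_context_eq hφ hφx i).trans hφx.symm)

theorem exists_prefix_preserving_pump [Finite T] {L : Language T} (hL : L.IsContextFree)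
    (t : List T) :
    ∃ N : ℕ, ∀ w ∈ L, t <+: w → N < w.length → ∃ u v x y z : List T,
      w = u ++ (v ++ x ++ y) ++ z ∧ 0 < v.length + y.length ∧
      ∀ i, u ++ (wordPow v i ++ x ++ wordPow y i) ++ z ∈ L ∧
        t <+: u ++ (wordPow v i ++ x ++ wordPow y i) ++ z := by
  have hfin : (Set.range (List.take t.length : List T → List T)).Finite :=
    (List.finite_length_le T t.length).subset (by rintro _ ⟨w, rfl⟩; simp)
  obtain ⟨N, hN⟩ := exists_pump_of_finite_range hL hfin take_context_congr
  refine ⟨N, fun w hw htw hlen => ?_⟩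
  obtain ⟨u, v, x, y, z, hwx, hvy, hpump⟩ := hN w hw hlen
  refine ⟨u, v, x, y, z, hwx, hvy, fun i => ⟨(hpump i).1, ?_⟩⟩
  rw [List.prefix_iff_eq_take] at htw ⊢
  exact htw.trans (hpump i).2.symm

end Pumping

theorem eq_of_replicate_append_cons_eq {α : Type*} {a b : α} (hab : a ≠ b) {m n : ℕ}
    {s t : List α} (h : List.replicate m a ++ b :: s = List.replicate n a ++ b :: t) :
    m = n := by
  induction m generalizing n with
  | zero => cases n <;> simp_all [List.replicate_succ, eq_comm]
  | succ m ih => cases n <;> simp_all [List.replicate_succ]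

/-- The word `aⁿ bⁿ`. -/
def block (n : ℕ) : List (Fin 2) :=
  List.replicate n 0 ++ List.replicate n 1

@[simp]
theorem length_block (n : ℕ) : (block n).length = 2 * n := by
  simp [block, two_mul]

theorem block_append_eq_block_append_iff {m n : ℕ} (hm : 1 ≤ m) (hn : 1 ≤ n) {s t : List (Fin 2)} :
    block m ++ s = block n ++ t ↔ m = n ∧ s = t := by
  refine ⟨fun h => ?_, fun ⟨hmn, hst⟩ => hmn ▸ hst ▸ rfl⟩
  obtain rfl : m = n := by
    obtain ⟨m, rfl⟩ := Nat.exists_eq_add_of_le' hm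
    obtain ⟨n, rfl⟩ := Nat.exists_eq_add_of_le' hn
    simp only [block, List.append_assoc, List.replicate_succ (a := (1 : Fin 2)),
      List.cons_append] at h
    exact eq_of_replicate_append_cons_eq (by decide) h
  exact ⟨rfl, List.append_cancel_left h⟩

theorem mem_L2_iff {H : Set ℕ} {p : List (Fin 2)} :
    p ∈ L2 H ↔
      (∃ l m n, 1 ≤ l ∧ 1 ≤ m ∧ 1 ≤ n ∧ (l ∈ H ∨ m ∈ H ∨ n ∈ H) ∧
        p = block l ++ (block m ++ block n)) ∨
      ∃ i j, 1 ≤ i ∧ 1 ≤ j ∧ p = block i ++ block j := by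
  simp [L2, block, List.append_assoc]

theorem exists_eq_block_of_isPrefix {H : Set ℕ} {s : ℕ} (hs : 1 ≤ s) (hsH : s ∉ H)
    {p : List (Fin 2)} (hp : p ∈ L2 H) (hpre : block s ++ (block s ++ [0]) <+: p) :
    ∃ n ∈ H, p = block s ++ (block s ++ block n) := by
  obtain ⟨t, rfl⟩ := hpre
  simp only [List.append_assoc] at hp ⊢
  rcases mem_L2_iff.mp hp with ⟨l, m, n, hl, hm, -, hH, h⟩ | ⟨i, j, hi, hj, h⟩
  · obtain ⟨rfl, hrest⟩ := (block_append_eq_block_append_iff hs hl).mp h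
    obtain ⟨rfl, -⟩ := (block_append_eq_block_append_iff hs hm).mp hrest
    exact ⟨n, by tauto, h⟩
  · obtain ⟨-, hrest⟩ := (block_append_eq_block_append_iff hs hi).mp h
    rw [← List.append_nil (block j)] at hrest
    simpa using ((block_append_eq_block_append_iff hs hj).mp hrest).2

theorem L2_not_contextFree_general {H : Set ℕ} (hinf : H.Infinite)
    (hprog : ∀ a d, 0 < d → ∃ i, a + i * d ∉ H) :
    ¬ Language.IsContextFree (T := Fin 2) (L2 H) := by
  intro hL
  obtain ⟨s, hs, hsH⟩ : ∃ s, 1 ≤ s ∧ s ∉ H := by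
    obtain ⟨i, hi⟩ := hprog 1 1 one_pos
    exact ⟨_, Nat.le_add_right 1 _, hi⟩
  obtain ⟨N, hN⟩ := exists_prefix_preserving_pump hL (block s ++ (block s ++ [0]))
  obtain ⟨h, hhH, hNh⟩ := hinf.exists_gt N
  have hmem : block s ++ (block s ++ block h) ∈ L2 H :=
    mem_L2_iff.mpr (.inl ⟨s, s, h, hs, hs, by omega, .inr (.inr hhH), rfl⟩)
  have hpre : block s ++ (block s ++ [0]) <+: block s ++ (block s ++ block h) := by
    obtain ⟨h, rfl⟩ := Nat.exists_eq_add_one.mpr (N.zero_le.trans_lt hNh)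
    simp [block, List.replicate_succ]
  obtain ⟨u, v, x, y, z, -, hvy, hpump⟩ :=
    hN _ hmem hpre (by simp only [List.length_append, length_block]; omega)
  have hlen (i : ℕ) : ∃ n ∈ H, u.length + x.length + z.length + i * (v.length + y.length) =
      4 * s + 2 * n := by
    obtain ⟨n, hn, heq⟩ := exists_eq_block_of_isPrefix hs hsH (hpump i).1 (hpump i).2
    have := congrArg List.length heq
    simp only [List.length_append, length_wordPow, length_block] at this
    exact ⟨n, hn, by linarith⟩
  obtain ⟨n₀, -, h₀⟩ := hlen 0
  obtain ⟨n₁, -, h₁⟩ := hlen 1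
  obtain ⟨d, rfl⟩ : ∃ d, n₁ = n₀ + d := Nat.exists_eq_add_of_le (by omega)
  obtain ⟨i, hi⟩ := hprog n₀ d (by omega)
  obtain ⟨n, hn, hni⟩ := hlen i
  rw [show v.length + y.length = 2 * d by omega] at hni
  exact hi ((show n = n₀ + i * d by linarith) ▸ hn)

theorem two_pow_add_two_pow_ne {x y z : ℕ} (h : x < y) : 2 ^ x + 2 ^ z ≠ 2 * 2 ^ y := by
  intro heq
  have hx : 0 < 2 ^ x := by positivity
  have hxy : 2 ^ x < 2 ^ y := Nat.pow_lt_pow_right one_lt_two h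
  have hyz : y < z := (Nat.pow_lt_pow_iff_right one_lt_two).mp (by omega)
  have hle : 2 ^ (y + 1) ≤ 2 ^ z := Nat.pow_le_pow_right two_pos hyz
  rw [pow_succ] at hle
  omega

theorem exists_add_mul_notMem_two_pow (a : ℕ) {d : ℕ} (hd : 0 < d) :
    ∃ i, a + i * d ∉ {n | ∃ k : ℕ, n = 2 ^ k} := by
  by_contra! hall
  obtain ⟨x, hx⟩ := hall 0
  obtain ⟨y, hy⟩ := hall 1
  obtain ⟨z, hz⟩ := hall 2
  have hxy : x < y := (Nat.pow_lt_pow_iff_right one_lt_two).mp (by omega)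
  exact two_pow_add_two_pow_ne (z := z) hxy (by omega)

/-- If `H` is an infinite set of powers of two, then `L₂` is not context-free
(Example 14). -/
theorem L2_not_contextFree (H : Set ℕ) (hinf : H.Infinite)
    (hpow : H ⊆ {n | ∃ k : ℕ, n = 2 ^ k}) :
    ¬ Language.IsContextFree (T := Fin 2) (L2 H) :=
  L2_not_contextFree_general hinf fun a _ hd =>
    (exists_add_mul_notMem_two_pow a hd).imp fun _ hi hiH => hi (hpow hiH)
end
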